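/- Let (X, B) be a weak solution on [0,1] of the Bessel-bridge SDE dX_t = [1_{X_t>0}((y−X_t)/(1−t) + 1/X_t) + 1_{X_t<0}((−y−X_t)/(1−t) + 1/X_t)] dt + dB_t with X_0 = 0 and y > 0. Then almost surely |X_1| = y and X does not change sign on (0,1]: either X_t > 0 for all t ∈ (0,1], or X_t < 0 for all t ∈ (0,1]. -/

import Mathlib

open MeasureTheory ProbabilityTheory Set
open scoped Classical

noncomputable section

/-- `B` is a Brownian motion with respect to the filtration `F` under `P`
(properties required for times `t ≥ 0`). -/
def IsBrownian {Ω : Type*} [MeasurableSpace Ω] (F : ℝ → MeasurableSpace Ω)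
    (P : Measure Ω) (B : ℝ → Ω → ℝ) : Prop :=
  (∀ ω, Continuous fun t => B t ω) ∧
  (∀ᵐ ω ∂P, B 0 ω = 0) ∧
  (∀ t, 0 ≤ t → Measurable[F t] (B t)) ∧
  (∀ s t, 0 ≤ s → s ≤ t →
    Indep (MeasurableSpace.comap (fun ω => B t ω - B s ω)
      (inferInstance : MeasurableSpace ℝ)) (F s) P) ∧
  (∀ s t, 0 ≤ s → s ≤ t →
    Measure.map (fun ω => B t ω - B s ω) P = gaussianReal 0 (Real.toNNReal (t - s)))

/-- The drift of the Bessel-bridge SDE with endpoints `±y`. -/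
def bBridge (y t x : ℝ) : ℝ :=
  if 0 < x then (y - x) / (1 - t) + 1 / x
  else if x < 0 then (-y - x) / (1 - t) + 1 / x
  else 0

lemma neg_log_one_add_le {r : ℝ} (hr : -1/2 ≤ r) :
    -Real.log (1 + r) ≤ -r + 3/4 * r^2 + 2 * r^4 := by
  let f : ℝ → ℝ := fun r => Real.log (1 + r) - r + 3/4 * r^2 + 2 * r^4
  have hd : ∀ x, -1/2 ≤ x →
      HasDerivAt f (1/(1+x) - 1 + 3/4 * (2*x) + 2*(4*x^3)) x := by
    intro x hx
    have h1 : HasDerivAt (fun r : ℝ => Real.log (1 + r)) (1/(1+x)) x :=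
      ((hasDerivAt_id x).const_add 1).log (by simp; linarith)
    have h2 := (hasDerivAt_pow 2 x).const_mul (3/4 : ℝ)
    have h4 := (hasDerivAt_pow 4 x).const_mul (2 : ℝ)
    refine (((h1.sub (hasDerivAt_id x)).add h2).add h4).congr_deriv ?_
    norm_num
  have hval : ∀ x : ℝ, -1/2 ≤ x → 1/(1+x) - 1 + 3/4 * (2*x) + 2*(4*x^3)
      = x * ((1/2 + 3/2 * x + 8 * x^2 * (1+x)) / (1+x)) := by
    intro x hx
    have : 1 + x ≠ 0 := by linarith
    field_simp
    ring
  have hpos : ∀ x : ℝ, -1/2 ≤ x → 0 ≤ (1/2 + 3/2 * x + 8 * x^2 * (1+x)) / (1+x) := by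
    intro x hx
    apply div_nonneg _ (by linarith)
    nlinarith [mul_nonneg (sq_nonneg x) (by linarith : 0 ≤ x + 1/2), sq_nonneg (x + 3/16)]
  have hf0 : f 0 = 0 := by simp [f]
  have key : 0 ≤ f r := by
    rcases le_total 0 r with h | h
    · have : MonotoneOn f (Icc 0 r) := by
        apply monotoneOn_of_deriv_nonneg (convex_Icc _ _)
        · exact fun x hx => (hd x (by linarith [hx.1])).continuousAt.continuousWithinAt
        · rw [interior_Icc]
          exact fun x hx =>
            (hd x (by linarith [hx.1])).differentiableAt.differentiableWithinAt
        · rw [interior_Icc]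
          intro x hx
          rw [(hd x (by linarith [hx.1])).deriv, hval x (by linarith [hx.1])]
          exact mul_nonneg hx.1.le (hpos x (by linarith [hx.1]))
      rw [← hf0]
      exact this ⟨le_rfl, h⟩ ⟨h, le_rfl⟩ h
    · have : AntitoneOn f (Icc r 0) := by
        apply antitoneOn_of_deriv_nonpos (convex_Icc _ _)
        · exact fun x hx => (hd x (by linarith [hx.1])).continuousAt.continuousWithinAt
        · rw [interior_Icc]
          exact fun x hx =>
            (hd x (by linarith [hx.1])).differentiableAt.differentiableWithinAt
        · rw [interior_Icc]
          intro x hx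
          rw [(hd x (by linarith [hx.1])).deriv, hval x (by linarith [hx.1])]
          exact mul_nonpos_of_nonpos_of_nonneg hx.2.le (hpos x (by linarith [hx.1]))
      rw [← hf0]
      exact this ⟨le_rfl, h⟩ ⟨h, le_rfl⟩ h
  simp only [f] at key
  linarith

/-- The Lyapunov function `z ^ 2 - log z`, with the logarithm cut off below `δ`. -/
def lyapunov (δ z : ℝ) : ℝ := z^2 - Real.log (max z δ)

lemma lyapunov_nonneg {δ z : ℝ} (hδ : 0 < δ) (hz : δ ≤ z) : 0 ≤ lyapunov δ z := by
  rw [lyapunov, max_eq_left hz]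
  nlinarith [Real.log_le_sub_one_of_pos (hδ.trans_le hz), sq_nonneg (z - 1)]

lemma neg_log_le_lyapunov {δ z : ℝ} (hδ : 0 < δ) (hz : z ≤ 2 * δ) :
    -Real.log (2 * δ) ≤ lyapunov δ z := by
  have : Real.log (max z δ) ≤ Real.log (2 * δ) :=
    Real.log_le_log (lt_max_of_lt_right hδ) (max_le hz (by linarith))
  rw [lyapunov]
  nlinarith [sq_nonneg z]

lemma lyapunov_add_le {δ z : ℝ} (hδ : 0 < δ) (hz : 2 * δ ≤ z) (d : ℝ) :
    lyapunov δ (z + d) ≤ lyapunov δ z + (2 * z - 1/z) * d + (1 + 3/4 / z^2) * d^2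
      + 2 / δ^4 * d^4 := by
  have hz0 : 0 < z := by linarith
  have hzδ : max z δ = z := max_eq_left (by linarith)
  suffices h : -Real.log (max (z + d) δ) ≤
      -Real.log z - d / z + 3/4 * (d / z)^2 + 2 / δ^4 * d^4 by
    rw [lyapunov, lyapunov, hzδ]
    have e1 : 3/4 * (d / z)^2 = 3/4 / z^2 * d^2 := by ring
    have e2 : d / z = 1 / z * d := by ring
    rw [e1, e2] at h
    nlinarith
  have hq : 0 ≤ 2 / δ^4 * d^4 := by positivity
  rcases le_or_gt (-1/2) (d / z) with hr | hr
  · have h1 := neg_log_one_add_le hr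
    have h2 : Real.log (z * (1 + d / z)) ≤ Real.log (max (z + d) δ) := by
      have : z * (1 + d / z) = z + d := by field_simp
      rw [this]
      apply Real.log_le_log _ (le_max_left _ _)
      rw [← this]
      exact mul_pos hz0 (by linarith)
    rw [Real.log_mul hz0.ne' (by linarith)] at h2
    have h3 : 2 * (d / z)^4 ≤ 2 / δ^4 * d^4 := by
      rw [div_pow, mul_div_assoc', div_mul_eq_mul_div]
      gcongr
      linarith
    linarith
  · have hd : d < -z / 2 := by
      rw [div_lt_iff₀ hz0] at hr
      linarith
    have h1 : Real.log δ ≤ Real.log (max (z + d) δ) := Real.log_le_log hδ (le_max_right _ _)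
    have h2 : Real.log (z / δ) ≤ z / δ := (Real.log_le_sub_one_of_pos (by positivity)).trans
      (by linarith)
    rw [Real.log_div hz0.ne' hδ.ne'] at h2
    have h3 : z / δ ≤ 2 * (-d / δ) := by
      rw [mul_div_assoc']
      gcongr
      linarith
    have h4 : 1 ≤ -d / δ := by
      rw [le_div_iff₀ hδ]
      linarith
    have h5 : -d / δ ≤ (-d / δ)^4 := le_self_pow₀ h4 (by norm_num)
    have h6 : 2 * (-d / δ)^4 = 2 / δ^4 * d^4 := by ring
    have h7 : 0 ≤ 3/4 * (d / z)^2 := by positivity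
    have h8 : 0 ≤ -(d / z) := by linarith
    linarith

lemma lyapunov_step_le {K δ : ℝ} (hK : 0 ≤ K) (hδ : 0 < δ) :
    ∃ A, 0 ≤ A ∧ ∀ Δ z w : ℝ, 0 < Δ → Δ ≤ 1 → 2 * δ < z →
      lyapunov δ (z + (1 / max z δ - K) * Δ + w) ≤ lyapunov δ z +
        ((3 + K^2) * Δ + A * Δ^2
        + (2 * z - 1/z + 2 * ((1/z - K) * Δ) * (1 + 3/4 / z^2)) * w
        + (1 + 3/4 / z^2) * (w^2 - Δ) + 16 / δ^4 * w^4) := by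
  refine ⟨(1 + 3/4 / δ^2) * (1/δ + K)^2 + 16 / δ^4 * (1/δ + K)^4, by positivity, ?_⟩
  intro Δ z w hΔ hΔ1 hz
  have hz0 : 0 < z := by linarith
  rw [max_eq_left (by linarith : δ ≤ z), add_assoc]
  have h := lyapunov_add_le hδ hz.le ((1/z - K) * Δ + w)
  set p := 1/z with hp
  have hp0 : 0 < p := by positivity
  have hpz : p * z = 1 := by rw [hp]; field_simp
  have hpδ : p ≤ 1/δ := one_div_le_one_div_of_le hδ (by linarith)
  have hz2 : 3/4 / z^2 = 3/4 * p^2 := by rw [hp]; field_simp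
  have hδ2 : 3/4 / δ^2 = 3/4 * (1/δ)^2 := by field_simp
  rw [hz2] at h ⊢
  rw [hδ2]
  have hφ : |p - K| ≤ 1/δ + K := abs_le.2 ⟨by linarith, by linarith⟩
  have hφ2 : (p - K)^2 ≤ (1/δ + K)^2 := sq_le_sq' (by linarith) (by linarith)
  have hφ4 : (p - K)^4 ≤ (1/δ + K)^4 := by
    have := pow_le_pow_left₀ (sq_nonneg _) hφ2 2
    nlinarith
  have hd4 : ((p - K) * Δ + w)^4 ≤ 8 * ((p - K) * Δ)^4 + 8 * w^4 := by
    have := Even.add_pow_le (a := (p - K) * Δ) (b := w) (n := 4) (by decide)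
    norm_num at this
    linarith
  have hq : 2 / δ^4 * ((p - K) * Δ + w)^4 ≤
      16 / δ^4 * ((1/δ + K)^4 * Δ^2) + 16 / δ^4 * w^4 := by
    have h1 : ((p - K) * Δ)^4 ≤ (1/δ + K)^4 * Δ^2 := by
      rw [mul_pow]
      have : Δ^4 ≤ Δ^2 := pow_le_pow_of_le_one hΔ.le hΔ1 (by norm_num)
      gcongr
    calc _ ≤ 2 / δ^4 * (8 * ((1/δ + K)^4 * Δ^2) + 8 * w^4) := by
          gcongr
          linarith
      _ = _ := by ring
  have hs : (1 + 3/4 * p^2) * ((p - K) * Δ)^2 ≤ (1 + 3/4 * (1/δ)^2) * ((1/δ + K)^2 * Δ^2) := by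
    rw [mul_pow]
    gcongr
  have hm : (2 * z - p) * (p - K) + (1 + 3/4 * p^2) ≤ 3 + K^2 := by
    nlinarith [sq_nonneg (p/2 - K), mul_nonneg hK hz0.le]
  have hm' := mul_le_mul_of_nonneg_right hm hΔ.le
  linear_combination h + hq + hs + hm'

/-- The Euler scheme with step `Δ` and noise `w`, started at `a`, for the drift `1 / z - K` with
the singularity cut off below `δ`. -/
def eulerScheme (K δ Δ a : ℝ) (w : ℕ → ℝ) : ℕ → ℝ
  | 0 => a
  | k + 1 => eulerScheme K δ Δ a w k + (1 / max (eulerScheme K δ Δ a w k) δ - K) * Δ + w k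

lemma integral_gaussianReal_pow_four {Δ : ℝ} (hΔ : 0 ≤ Δ) :
    ∫ x, x^4 ∂(gaussianReal 0 Δ.toNNReal) = Δ^2 * ∫ x, x^4 ∂(gaussianReal 0 1) := by
  have h := gaussianReal_map_const_mul (μ := 0) (v := 1) (Real.sqrt Δ)
  have hv : (.mk (Real.sqrt Δ ^ 2) (sq_nonneg _) * 1 : NNReal) = Δ.toNNReal := by
    ext
    simp [Real.sq_sqrt hΔ, hΔ]
  rw [mul_zero, hv] at h
  rw [← h, integral_map (by fun_prop) (by fun_prop)]
  have h4 : Real.sqrt Δ ^ 4 = Δ^2 := by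
    rw [show 4 = 2 * 2 by norm_num, pow_mul, Real.sq_sqrt hΔ]
  simp_rw [mul_pow, h4]
  rw [integral_const_mul]

lemma integrable_pow_gaussianReal (v : NNReal) {n : ℕ} (hn : n ≠ 0) :
    Integrable (fun x => x^n) (gaussianReal 0 v) := by
  have h := (memLp_id_gaussianReal (μ := 0) (v := v) (n : NNReal)).integrable_norm_pow
    (by exact_mod_cast hn)
  rw [← integrable_norm_iff (by fun_prop)]
  simpa [norm_pow] using h

lemma integral_sq_gaussianReal {Δ : ℝ} (hΔ : 0 ≤ Δ) :
    ∫ x, x^2 ∂(gaussianReal 0 Δ.toNNReal) = Δ := by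
  have h := variance_id_gaussianReal (μ := 0) (v := Δ.toNNReal)
  rw [variance_eq_integral (by fun_prop)] at h
  simpa [integral_id_gaussianReal, hΔ] using h

lemma integrable_mul_comp_of_indep {Ω : Type*} {G m : MeasurableSpace Ω} {P : Measure Ω}
    {f W : Ω → ℝ} {g : ℝ → ℝ}
    (hf : Measurable[G] f) (hfi : Integrable f P) (hg : Measurable g)
    (hgi : Integrable (fun ω => g (W ω)) P)
    (hind : Indep (MeasurableSpace.comap W inferInstance) G P) (h0 : ∫ ω, g (W ω) ∂P = 0) :
    Integrable (fun ω => f ω * g (W ω)) P ∧ ∫ ω, f ω * g (W ω) ∂P = 0 := by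
  have h1 : IndepFun f W P := by
    rw [IndepFun_iff_Indep]
    exact indep_of_indep_of_le_left hind.symm hf.comap_le
  have h2 : IndepFun f (fun ω => g (W ω)) P := h1.comp measurable_id hg
  refine ⟨h2.integrable_mul hfi hgi, ?_⟩
  rw [h2.integral_fun_mul_eq_mul_integral hfi.aestronglyMeasurable hgi.aestronglyMeasurable, h0,
    mul_zero]

lemma measurable_eulerScheme {Ω : Type*} {G : ℕ → MeasurableSpace Ω} {W : ℕ → Ω → ℝ} (hG : Monotone G) (hW : ∀ k, Measurable[G (k + 1)] (W k))
    (K δ Δ a : ℝ) (k : ℕ) :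
    Measurable[G k] (fun ω => eulerScheme K δ Δ a (fun j => W j ω) k) := by
  induction k with
  | zero => exact measurable_const
  | succ k ih =>
    have h1 := ih.mono (hG k.le_succ) le_rfl
    have h2 : Measurable fun z : ℝ => z + (1 / max z δ - K) * Δ := by fun_prop
    exact (h2.comp h1).add (hW k)

section
variable {Ω : Type*} [m : MeasurableSpace Ω] {P : Measure Ω}

lemma memLp_eulerScheme {W : ℕ → Ω → ℝ} [IsProbabilityMeasure P] {δ : ℝ} (hδ : 0 < δ)
    (hW : ∀ k, MemLp (W k) 2 P) (K Δ a : ℝ) (k : ℕ) :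
    MemLp (fun ω => eulerScheme K δ Δ a (fun j => W j ω) k) 2 P := by
  induction k with
  | zero => exact memLp_const a
  | succ k ih =>
    refine (ih.add ?_).add (hW k)
    have h2 : Measurable fun z : ℝ => (1 / max z δ - K) * Δ := by fun_prop
    refine MemLp.of_bound (h2.comp_aemeasurable ih.aemeasurable).aestronglyMeasurable
      ((1 / δ + |K|) * |Δ|) (ae_of_all _ fun ω => ?_)
    rw [Real.norm_eq_abs, abs_mul]
    gcongr
    refine (abs_sub _ _).trans ?_
    gcongr
    rw [abs_of_pos (by positivity)]
    exact one_div_le_one_div_of_le hδ (le_max_right _ _)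

/-- The probability that the Euler scheme comes close to zero, uniformly in the step. -/
lemma measure_eulerScheme_le [IsProbabilityMeasure P] {K δ : ℝ} (hK : 0 ≤ K) (hδ : 0 < δ) :
    ∃ A, 0 ≤ A ∧ ∀ (Δ a : ℝ) (G : ℕ → MeasurableSpace Ω) (W : ℕ → Ω → ℝ), 0 < Δ → Δ ≤ 1 →
      2 * δ < a → (∀ k, G k ≤ m) → Monotone G → (∀ k, Measurable[G (k + 1)] (W k)) →
      (∀ k, Indep (MeasurableSpace.comap (W k) inferInstance) (G k) P) →
      (∀ k, Measure.map (W k) P = gaussianReal 0 Δ.toNNReal) → ∀ n : ℕ,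
      MeasurableSet {ω | ∃ k ≤ n, eulerScheme K δ Δ a (fun j => W j ω) k ≤ 2 * δ} ∧
      -Real.log (2 * δ) *
          P.real {ω | ∃ k ≤ n, eulerScheme K δ Δ a (fun j => W j ω) k ≤ 2 * δ} ≤
        lyapunov δ a + n * ((3 + K^2) * Δ + A * Δ^2) := by
  obtain ⟨A, hA, hstep⟩ := lyapunov_step_le hK hδ
  set c := ∫ x, x^4 ∂(gaussianReal 0 1) with hc
  have hc0 : 0 ≤ c := integral_nonneg fun x => by positivity
  refine ⟨A + 16 / δ^4 * c, by positivity, ?_⟩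
  intro Δ a G W hΔ hΔ1 ha hGle hG hW hind hlaw n
  have hWm : ∀ k, Measurable (W k) := fun k => (hW k).mono (hGle _) le_rfl
  have hWint : ∀ k, ∀ p ≠ 0, Integrable (fun ω => W k ω ^ p) P := by
    intro k p hp
    have := integrable_pow_gaussianReal Δ.toNNReal hp
    rw [← hlaw k] at this
    exact this.comp_measurable (hWm k)
  have hW2 : ∀ k, MemLp (W k) 2 P := fun k =>
    (memLp_two_iff_integrable_sq (hWm k).aestronglyMeasurable).2 (hWint k 2 (by norm_num))
  have hE : ∀ k (g : ℝ → ℝ), Measurable g →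
      ∫ ω, g (W k ω) ∂P = ∫ x, g x ∂(gaussianReal 0 Δ.toNNReal) := by
    intro k g hg
    rw [← hlaw k, integral_map (hWm k).aemeasurable hg.aestronglyMeasurable]
  have hE1 : ∀ k, ∫ ω, W k ω ∂P = 0 := fun k =>
    (hE k id measurable_id).trans integral_id_gaussianReal
  have hE2 : ∀ k, ∫ ω, (W k ω ^ 2 - Δ) ∂P = 0 := fun k => by
    rw [integral_sub (hWint k 2 (by norm_num)) (integrable_const _),
      hE k (fun x => x^2) (by fun_prop), integral_sq_gaussianReal hΔ.le]
    simp
  have hE4 : ∀ k, ∫ ω, W k ω ^ 4 ∂P = Δ^2 * c := fun k =>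
    (hE k (fun x => x^4) (by fun_prop)).trans (integral_gaussianReal_pow_four hΔ.le)
  set Z : ℕ → Ω → ℝ := fun k ω => eulerScheme K δ Δ a (fun j => W j ω) k with hZ
  have hZm : ∀ k, Measurable[G k] (Z k) := measurable_eulerScheme hG hW K δ Δ a
  have hZ2 : ∀ k, MemLp (Z k) 2 P := memLp_eulerScheme hδ hW2 K Δ a
  have hZ1 : ∀ k, Integrable (Z k) P := fun k => (hZ2 k).integrable (by norm_num)
  set S : ℕ → Set Ω := fun k => {ω | ∀ j ≤ k, 2 * δ < Z j ω} with hS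
  have hSm : ∀ k, MeasurableSet[G k] (S k) := by
    intro k
    have : S k = ⋂ j, ⋂ (_ : j ≤ k), Z j ⁻¹' Ioi (2 * δ) := by
      ext ω
      simp [hS]
    rw [this]
    exact MeasurableSet.iInter fun j => MeasurableSet.iInter fun hj =>
      hG hj _ (hZm j measurableSet_Ioi)
  have hSm' : ∀ k, MeasurableSet (S k) := fun k => hGle k _ (hSm k)
  have hcompl : {ω | ∃ k ≤ n, Z k ω ≤ 2 * δ} = (S n)ᶜ := by
    ext ω
    simp [hS]
  change MeasurableSet {ω | ∃ k ≤ n, Z k ω ≤ 2 * δ} ∧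
    _ * P.real {ω | ∃ k ≤ n, Z k ω ≤ 2 * δ} ≤ _
  rw [hcompl]
  refine ⟨(hSm' n).compl, ?_⟩
  set l := -Real.log (2 * δ) with hl
  set U : ℕ → Ω → ℝ := fun k ω =>
    (S k).indicator (fun ω => lyapunov δ (Z k ω)) ω + (S k)ᶜ.indicator (fun _ => l) ω with hU
  have hlyap : Measurable (lyapunov δ) := by
    unfold lyapunov
    fun_prop
  have hlint : ∀ k, Integrable (fun ω => lyapunov δ (Z k ω)) P := by
    intro k
    unfold lyapunov
    refine (hZ2 k).integrable_sq.sub ?_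
    refine Integrable.mono' (g := fun ω => |Z k ω| + (δ + |Real.log δ|))
      ((hZ1 k).abs.add (integrable_const _)) ?_ (ae_of_all _ fun ω => ?_)
    · exact Measurable.aestronglyMeasurable (by
        have := (hZm k).mono (hGle k) le_rfl
        fun_prop)
    · have h0 : 0 < max (Z k ω) δ := lt_max_of_lt_right hδ
      have h1 := Real.log_le_sub_one_of_pos h0
      have h2 : Real.log δ ≤ Real.log (max (Z k ω) δ) := Real.log_le_log hδ (le_max_right _ _)
      have h3 : max (Z k ω) δ ≤ |Z k ω| + δ :=
        max_le (by linarith [le_abs_self (Z k ω)]) (by linarith [abs_nonneg (Z k ω)])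
      rw [Real.norm_eq_abs]
      refine abs_le.2 ⟨?_, ?_⟩
      · linarith [neg_abs_le (Real.log δ), abs_nonneg (Z k ω)]
      · linarith [abs_nonneg (Real.log δ)]
  have hUint : ∀ k, Integrable (U k) P := fun k =>
    ((hlint k).indicator (hSm' k)).add ((integrable_const l).indicator (hSm' k).compl)
  have hmain : ∀ k, ∫ ω, U k ω ∂P ≤
      lyapunov δ a + k * ((3 + K^2) * Δ + (A + 16 / δ^4 * c) * Δ^2) := by
    intro k
    induction k with
    | zero =>
      have : ∀ ω, U 0 ω = lyapunov δ a := by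
        intro ω
        have h0 : ω ∈ S 0 := by
          intro j hj
          rw [Nat.le_zero.1 hj]
          exact ha
        simp [hU, h0, hZ, eulerScheme]
      simp [this]
    | succ k ih =>
      set F₁ : Ω → ℝ := (S k).indicator fun ω => 2 * Z k ω - 1/Z k ω +
        2 * ((1/Z k ω - K) * Δ) * (1 + 3/4 / Z k ω^2) with hF₁
      set F₂ : Ω → ℝ := (S k).indicator fun ω => 1 + 3/4 / Z k ω^2 with hF₂
      have hpt : ∀ ω, U (k+1) ω ≤ U k ω + ((3 + K^2) * Δ + A * Δ^2) + F₁ ω * W k ω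
          + F₂ ω * (W k ω^2 - Δ) + 16 / δ^4 * W k ω^4 := by
        intro ω
        have hn0 : 0 ≤ (3 + K^2) * Δ + A * Δ^2 := by positivity
        have hn4 : 0 ≤ 16 / δ^4 * W k ω^4 := by positivity
        by_cases hω : ω ∈ S k
        · have hle : U (k+1) ω ≤ lyapunov δ (Z (k+1) ω) := by
            by_cases hω' : ω ∈ S (k+1)
            · simp [hU, hω']
            · have : Z (k+1) ω ≤ 2 * δ := by
                by_contra! hcon
                refine hω' fun j hj => ?_
                rcases Nat.le_succ_iff.1 hj with h | h
                · exact hω j h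
                · rw [h]
                  exact hcon
              simpa [hU, hω'] using neg_log_le_lyapunov hδ this
          have := hstep Δ (Z k ω) (W k ω) hΔ hΔ1 (hω k le_rfl)
          have hz : Z (k+1) ω = Z k ω + (1 / max (Z k ω) δ - K) * Δ + W k ω := rfl
          rw [← hz] at this
          simp only [hF₁, hF₂, hU, indicator_of_mem hω, indicator_of_notMem (notMem_compl_iff.2 hω)]
          simp only [hU] at hle
          linarith
        · have hω' : ω ∉ S (k+1) := fun h => hω fun j hj => h j (hj.trans k.le_succ)
          simp only [hF₁, hF₂, hU, indicator_of_notMem hω, indicator_of_notMem hω',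
            indicator_of_mem (mem_compl hω), indicator_of_mem (mem_compl hω')]
          linarith
      have hinv : ∀ ω ∈ S k, 0 < 1 / Z k ω ∧ 1 / Z k ω ≤ 1 / δ := by
        intro ω hω
        have := hω k le_rfl
        exact ⟨by have : 0 < Z k ω := by linarith
                  positivity, one_div_le_one_div_of_le hδ (by linarith)⟩
      have hf₂m : Measurable fun z : ℝ => 1 + 3/4 / z^2 := by fun_prop
      have hF₂m : Measurable[G k] F₂ := (hf₂m.comp (hZm k)).indicator (hSm k)
      have hF₂b : ∀ ω, |F₂ ω| ≤ 1 + 3/4 * (1/δ)^2 := by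
        intro ω
        by_cases hω : ω ∈ S k
        · simp only [hF₂, indicator_of_mem hω]
          rw [show 3/4 / Z k ω^2 = 3/4 * (1/Z k ω)^2 by ring, abs_of_nonneg (by positivity)]
          have := hinv ω hω
          have h1 := this.1.le
          have h2 := this.2
          gcongr
        · simp only [hF₂, indicator_of_notMem hω, abs_zero]
          positivity
      have hF₂i : Integrable F₂ P := Integrable.of_bound
        (hF₂m.mono (hGle k) le_rfl).aestronglyMeasurable _ (ae_of_all _ hF₂b)
      have hf₁m : Measurable fun z : ℝ => 2 * z - 1/z + 2 * ((1/z - K) * Δ) * (1 + 3/4 / z^2) := by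
        fun_prop
      have hF₁m : Measurable[G k] F₁ := (hf₁m.comp (hZm k)).indicator (hSm k)
      have hF₁i : Integrable F₁ P := by
        refine Integrable.mono' (g := fun ω => 2 * |Z k ω| +
          (1/δ + 2 * ((1/δ + K) * Δ) * (1 + 3/4 * (1/δ)^2)))
          (((hZ1 k).abs.const_mul 2).add (integrable_const _))
          (hF₁m.mono (hGle k) le_rfl).aestronglyMeasurable (ae_of_all _ fun ω => ?_)
        rw [Real.norm_eq_abs]
        by_cases hω : ω ∈ S k
        · have hb := hF₂b ω
          simp only [hF₁, hF₂, indicator_of_mem hω] at hb ⊢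
          obtain ⟨h1, h2⟩ := hinv ω hω
          have h3 : |2 * ((1/Z k ω - K) * Δ) * (1 + 3/4 / Z k ω^2)| ≤
              2 * ((1/δ + K) * Δ) * (1 + 3/4 * (1/δ)^2) := by
            rw [abs_mul, abs_mul, abs_mul, abs_of_pos hΔ, abs_two]
            gcongr
            exact abs_le.2 ⟨by linarith [one_div_pos.2 hδ], by linarith⟩
          calc _ ≤ |2 * Z k ω| + |1/Z k ω| + |2 * ((1/Z k ω - K) * Δ) * (1 + 3/4 / Z k ω^2)| :=
                (abs_add_le _ _).trans (by gcongr; exact abs_sub _ _)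
            _ ≤ _ := by
                rw [abs_mul, abs_two, abs_of_pos h1]
                linarith
        · simp only [hF₁, indicator_of_notMem hω, abs_zero]
          positivity
      obtain ⟨hi₁, he₁⟩ := integrable_mul_comp_of_indep (g := fun x => x) hF₁m hF₁i
        measurable_id ((hW2 k).integrable (by norm_num)) (hind k) (hE1 k)
      obtain ⟨hi₂, he₂⟩ := integrable_mul_comp_of_indep (g := fun x => x^2 - Δ) hF₂m hF₂i
        (by fun_prop) ((hWint k 2 (by norm_num)).sub (integrable_const _)) (hind k) (hE2 k)
      have hi₄ := (hWint k 4 (by norm_num)).const_mul (16 / δ^4)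
      have hi₀ := (hUint k).add (integrable_const (μ := P) ((3 + K^2) * Δ + A * Δ^2))
      have := integral_mono (hUint (k+1)) (((hi₀.add hi₁).add hi₂).add hi₄) hpt
      simp only [Pi.add_apply] at this
      rw [integral_add (by exact (hi₀.add hi₁).add hi₂) hi₄,
        integral_add (by exact hi₀.add hi₁) hi₂, integral_add (by exact hi₀) hi₁,
        integral_add (hUint k) (integrable_const _), he₁, he₂, integral_const_mul, hE4 k] at this
      simp only [integral_const, probReal_univ, smul_eq_mul, one_mul] at this
      push_cast
      linarith
  refine le_trans ?_ (hmain n)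
  have : ∫ ω, (S n)ᶜ.indicator (fun _ => l) ω ∂P = l * P.real (S n)ᶜ := by
    rw [integral_indicator_const _ (hSm' n).compl, smul_eq_mul, mul_comm]
  rw [← this]
  refine integral_mono ((integrable_const l).indicator (hSm' n).compl) (hUint n) fun ω => ?_
  simp only [hU]
  refine le_add_of_nonneg_left (indicator_nonneg (fun ω hω => ?_) _)
  exact lyapunov_nonneg hδ (by linarith [hω n le_rfl])

end

/-- Along the increments of `x` on `[s, v)`, its drift is at least `1 / x - K`. -/
def DriftBound (b x : ℝ → ℝ) (K s v : ℝ) : Prop :=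
  ∀ r t c, s ≤ r → r ≤ t → t < v → (∀ u ∈ Icc r t, c ≤ 1 / x u - K) →
    c * (t - r) + (b t - b r) ≤ x t - x r

/-- No path that starts at height at least `a` at time `s`, is driven by `b` and has drift at
least `1 / x - K` hits zero within one unit of time. -/
def NoHit (b : ℝ → ℝ) (s a K : ℝ) : Prop :=
  ∀ (x : ℝ → ℝ) (v : ℝ), Continuous x → s < v → v ≤ s + 1 → (∀ u ∈ Ico s v, 0 < x u) → x v = 0 →
    a ≤ x s → ¬DriftBound b x K s v

lemma one_div_max_sub_le {δ z x : ℝ} (hδ : 0 < δ) (hx : 0 < x) :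
    1 / max z δ - 1 / x ≤ 1 / δ^2 * max (x - z) 0 := by
  have h1 : 1 / max x δ ≤ 1 / x := one_div_le_one_div_of_le hx (le_max_left _ _)
  have hz0 : 0 < max z δ := lt_max_of_lt_right hδ
  have hx0 : 0 < max x δ := lt_max_of_lt_right hδ
  have h2 : 1 / max z δ - 1 / max x δ = 1 / (max z δ * max x δ) * (max x δ - max z δ) := by
    field_simp
  have h3 : max x δ - max z δ ≤ max (x - z) 0 := by
    have := max_sub_max_le_max x δ z δ
    simpa using this
  have h4 : 1 / (max z δ * max x δ) ≤ 1 / δ^2 := by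
    apply one_div_le_one_div_of_le (by positivity)
    rw [sq]
    gcongr <;> exact le_max_right _ _
  calc _ ≤ 1 / max z δ - 1 / max x δ := by linarith
    _ ≤ 1 / (max z δ * max x δ) * max (x - z) 0 := by
      rw [h2]
      gcongr
    _ ≤ _ := by gcongr

lemma eulerScheme_sub_le {K δ a s v ε : ℝ} {n : ℕ} {x b : ℝ → ℝ} (hδ : 0 < δ) (hn : 0 < n)
    (hnδ : 1 / (n : ℝ) ≤ δ^2) (hε : 0 ≤ ε)
    (hosc : ∀ r ∈ Icc s v, ∀ u ∈ Icc s v, |u - r| ≤ 1 / n → |x u - x r| ≤ ε)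
    (hpos : ∀ u ∈ Ico s v, 0 < x u) (ha : a ≤ x s) (hb : DriftBound b x K s v) (k : ℕ)
    (hk : s + k / n < v) :
    eulerScheme K δ (1/n) a (fun j => b (s + (j + 1 : ℕ) / n) - b (s + j / n)) k - x (s + k / n)
      ≤ k / n * (1 / δ^2 * ε) := by
  have hn' : (0:ℝ) < n := by exact_mod_cast hn
  induction k with
  | zero => simpa [eulerScheme] using ha
  | succ k ih =>
    rw [eulerScheme]
    set Z := eulerScheme K δ (1/n) a (fun j => b (s + (j + 1 : ℕ) / n) - b (s + j / n)) k
    set r := s + (k : ℝ) / n with hr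
    set t := s + ((k + 1 : ℕ) : ℝ) / n with ht
    have htr : t - r = 1 / n := by
      rw [hr, ht]
      push_cast
      ring
    have hd : (0:ℝ) < 1 / n := by positivity
    have hsr : s ≤ r := by
      rw [hr]
      have : (0:ℝ) ≤ (k : ℝ) / n := by positivity
      linarith
    have ih := ih (by linarith)
    have hinc := hb r t (1 / max Z δ - K - 1 / δ^2 * (ε + max (x r - Z) 0)) hsr (by linarith) hk ?_
    · rw [htr] at hinc
      have hk' : ((k + 1 : ℕ) : ℝ) / n * (1 / δ^2 * ε) =
          (k : ℝ) / n * (1 / δ^2 * ε) + 1 / n * (1 / δ^2 * ε) := by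
        push_cast
        ring
      rw [hk']
      have h0 : 0 ≤ (k : ℝ) / n * (1 / δ^2 * ε) := by positivity
      have hstep : 1 / (n:ℝ) * (1 / δ^2) ≤ 1 := by
        rw [mul_one_div]
        exact (div_le_one (by positivity)).2 hnδ
      have hm : 1 / (n:ℝ) * (1 / δ^2) * max (x r - Z) 0 ≤ max (x r - Z) 0 :=
        mul_le_of_le_one_left (le_max_right _ _) hstep
      have hm2 : Z - x r + max (x r - Z) 0 ≤ (k : ℝ) / n * (1 / δ^2 * ε) := by
        rcases max_cases (x r - Z) 0 with ⟨h, _⟩ | ⟨h, _⟩ <;> rw [h] <;> linarith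
      linear_combination hinc + hm + hm2
    · intro u hu
      have hu' : u ∈ Ico s v := ⟨hsr.trans hu.1, hu.2.trans_lt hk⟩
      have h1 := one_div_max_sub_le (z := Z) hδ (hpos u hu')
      have h2 := hosc r ⟨hsr, by linarith⟩ u ⟨hu'.1, hu'.2.le⟩
        (by rw [abs_of_nonneg (by linarith [hu.1])]; linarith [hu.2])
      have h3 : max (x u - Z) 0 ≤ ε + max (x r - Z) 0 := by
        apply max_le
        · linarith [le_max_left (x r - Z) 0, le_abs_self (x u - x r)]
        · linarith [le_max_right (x r - Z) 0]
      have h4 := mul_le_mul_of_nonneg_left h3 (by positivity : 0 ≤ 1 / δ^2)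
      linarith

lemma eventually_exists_eulerScheme_le {K δ a s v : ℝ} {x b : ℝ → ℝ} (hδ : 0 < δ)
    (hx : Continuous x) (hsv : s < v) (hv1 : v ≤ s + 1) (hpos : ∀ u ∈ Ico s v, 0 < x u)
    (hxv : x v = 0) (ha : a ≤ x s) (hb : DriftBound b x K s v) :
    ∀ᶠ n : ℕ in Filter.atTop, ∃ k ≤ n,
      eulerScheme K δ (1/n) a (fun j => b (s + (j + 1 : ℕ) / n) - b (s + j / n)) k ≤ 2 * δ := by
  obtain ⟨η, hη, hosc⟩ := Metric.uniformContinuousOn_iff.1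
    ((isCompact_Icc (a := s) (b := v)).uniformContinuousOn_of_continuous hx.continuousOn)
    (δ^3) (by positivity)
  obtain ⟨θ, hθ, hnear⟩ := Metric.eventually_nhds_iff.1
    (hx.continuousAt.eventually_lt (continuousAt_const (y := δ)) (by rw [hxv]; exact hδ) :
      ∀ᶠ u in nhds v, x u < δ)
  set v' := max s (v - θ / 2) with hv'
  have hv'v : v' < v := max_lt hsv (by linarith)
  have hlim := tendsto_one_div_atTop_nhds_zero_nat (𝕜 := ℝ)
  filter_upwards [hlim.eventually_lt_const hη, hlim.eventually_lt_const (sub_pos.2 hv'v),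
    hlim.eventually_lt_const (pow_pos hδ 2), Filter.eventually_gt_atTop 0] with n h1 h2 h3 h4
  have hn' : (0:ℝ) < n := by exact_mod_cast h4
  set k := ⌈(v' - s) * n⌉₊ with hk
  have hk1 : (v' - s) * n ≤ k := Nat.le_ceil _
  have hk2 : (k : ℝ) < (v' - s) * n + 1 :=
    Nat.ceil_lt_add_one (mul_nonneg (sub_nonneg.2 (le_max_left _ _)) hn'.le)
  have hk1' : v' ≤ s + k / n := by
    rw [← le_div_iff₀ hn'] at hk1
    linarith
  have hk2' : s + k / n < v := by
    have : (k : ℝ) / n < v' - s + 1 / n := by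
      rw [div_lt_iff₀ hn', add_mul, one_div_mul_cancel hn'.ne']
      exact hk2
    linarith
  have hkn : (k : ℝ) / n ≤ 1 := by linarith
  refine ⟨k, by exact_mod_cast (div_le_one hn').1 hkn, ?_⟩
  have h := eulerScheme_sub_le (K := K) (a := a) (b := b) hδ h4 h3.le (ε := δ^3) (by positivity)
    (fun r hr u hu hru => (hosc u hu r hr (by rw [Real.dist_eq]; linarith)).le) hpos ha hb k hk2'
  have h5 : x (s + k / n) < δ := by
    apply hnear
    rw [Real.dist_eq, abs_lt]
    constructor <;> linarith [le_max_right s (v - θ / 2)]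
  have h6 : (k : ℝ) / n * (1 / δ^2 * δ^3) ≤ δ := by
    have : 1 / δ^2 * δ^3 = δ := by field_simp
    rw [this]
    exact mul_le_of_le_one_left hδ.le hkn
  linarith

lemma ae_noHit {Ω : Type*} [m : MeasurableSpace Ω] {P : Measure Ω} [IsProbabilityMeasure P]
    {F : ℝ → MeasurableSpace Ω} (hFle : ∀ t, 0 ≤ t → F t ≤ m)
    (hFmono : ∀ s t : ℝ, 0 ≤ s → s ≤ t → F s ≤ F t) {B : ℝ → Ω → ℝ} (hB : IsBrownian F P B)
    {s a K : ℝ} (hs : 0 ≤ s) (ha : 0 < a) (hK : 0 ≤ K) :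
    ∀ᵐ ω ∂P, NoHit (fun t => B t ω) s a K := by
  obtain ⟨-, -, hBm, hBi, hBl⟩ := hB
  rw [ae_iff]
  set C := a^2 - Real.log a + 4 + K^2 with hC
  have hbound : ∀ᶠ j : ℕ in Filter.atTop,
      P {ω | ¬NoHit (fun t => B t ω) s a K} ≤ ENNReal.ofReal (C / j) := by
    have hexp : Filter.Tendsto (fun j : ℕ => Real.exp (-(j:ℝ))) Filter.atTop (nhds 0) :=
      Real.tendsto_exp_neg_atTop_nhds_zero.comp tendsto_natCast_atTop_atTop
    filter_upwards [hexp.eventually_lt_const ha, Filter.eventually_gt_atTop 0] with j hja hj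
    set δ := Real.exp (-(j:ℝ)) / 2 with hδdef
    have hδ : 0 < δ := by positivity
    have h2δ : 2 * δ = Real.exp (-(j:ℝ)) := by rw [hδdef]; ring
    have hj' : (0:ℝ) < j := by exact_mod_cast hj
    obtain ⟨A, hA, hmeas⟩ := measure_eulerScheme_le (P := P) hK hδ
    set H : ℕ → Set Ω := fun n => {ω | ∃ k ≤ n, eulerScheme K δ (1/n) a
      (fun j => B (s + (j + 1 : ℕ) / n) ω - B (s + j / n) ω) k ≤ 2 * δ} with hH
    have hHle : ∀ n : ℕ, 0 < n → A ≤ n → P (H n) ≤ ENNReal.ofReal (C / j) := by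
      intro n hn hAn
      have hn' : (0:ℝ) < n := by exact_mod_cast hn
      have hpos : ∀ k : ℕ, 0 ≤ s + (k:ℝ) / n := fun k => by positivity
      have hle : ∀ k l : ℕ, k ≤ l → s + (k:ℝ) / n ≤ s + (l:ℝ) / n := fun k l hkl => by gcongr
      have h := (hmeas (1/n) a (fun k => F (s + k / n))
        (fun k ω => B (s + (k + 1 : ℕ) / n) ω - B (s + k / n) ω) (by positivity)
        (by rw [div_le_one hn']; exact_mod_cast hn) (by rw [h2δ]; exact hja)
        (fun k => hFle _ (hpos k)) (fun k l hkl => hFmono _ _ (hpos k) (hle k l hkl))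
        (fun k => (hBm _ (hpos _)).sub ((hBm _ (hpos k)).mono
          (hFmono _ _ (hpos k) (hle _ _ k.le_succ)) le_rfl))
        (fun k => hBi _ _ (hpos k) (hle _ _ k.le_succ))
        (fun k => by
          rw [hBl _ _ (hpos k) (hle _ _ k.le_succ)]
          congr 2
          push_cast
          ring) n).2
      rw [h2δ, Real.log_exp, neg_neg, lyapunov, max_eq_left (by linarith)] at h
      have e : (n:ℝ) * ((3 + K^2) * (1 / n) + A * (1 / n)^2) = 3 + K^2 + A / n := by
        field_simp
      have hAn' : A / n ≤ 1 := (div_le_one hn').2 hAn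
      rw [e] at h
      rw [← ofReal_measureReal]
      apply ENNReal.ofReal_le_ofReal
      rw [le_div_iff₀ hj', mul_comm]
      rw [← h2δ] at h
      refine h.trans ?_
      linarith
    have hsub : {ω | ¬NoHit (fun t => B t ω) s a K} ⊆ ⋃ N : ℕ, ⋂ n ≥ N, H n := by
      intro ω hω
      simp only [NoHit, mem_ofPred_eq] at hω
      push Not at hω
      obtain ⟨x, v, hx, hsv, hv1, hpos, hxv, hax, hb⟩ := hω
      obtain ⟨N, hN⟩ := Filter.eventually_atTop.1
        (eventually_exists_eulerScheme_le hδ hx hsv hv1 hpos hxv hax hb)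
      exact mem_iUnion.2 ⟨N, mem_iInter₂.2 hN⟩
    refine (measure_mono hsub).trans ?_
    have hmono : Monotone fun N : ℕ => ⋂ n ≥ N, H n :=
      fun N M hNM => biInter_subset_biInter_left fun n hn => le_trans hNM hn
    rw [hmono.measure_iUnion]
    refine iSup_le fun N => ?_
    refine (measure_mono (biInter_subset_of_mem
      (le_max_left N (max 1 ⌈A⌉₊) : max N (max 1 ⌈A⌉₊) ≥ N))).trans (hHle _ ?_ ?_)
    · exact lt_of_lt_of_le one_pos ((le_max_left _ _).trans (le_max_right _ _))
    · exact (Nat.le_ceil A).trans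
        (by exact_mod_cast (le_max_right 1 ⌈A⌉₊).trans (le_max_right N _))
  have hlim : Filter.Tendsto (fun j : ℕ => ENNReal.ofReal (C / j)) Filter.atTop (nhds 0) := by
    rw [← ENNReal.ofReal_zero]
    exact ENNReal.tendsto_ofReal (tendsto_const_div_atTop_nhds_zero_nat C)
  exact le_antisymm (ge_of_tendsto hlim hbound) zero_le

lemma IsBrownian.neg {Ω : Type*} [MeasurableSpace Ω] {F : ℝ → MeasurableSpace Ω} {P : Measure Ω}
    {B : ℝ → Ω → ℝ} (hFle : ∀ t, 0 ≤ t → F t ≤ ‹MeasurableSpace Ω›) (hB : IsBrownian F P B) :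
    IsBrownian F P (fun t ω => -B t ω) := by
  obtain ⟨hBc, hB0, hBm, hBi, hBl⟩ := hB
  have hfun : ∀ s t, (fun ω => -B t ω - -B s ω) = Neg.neg ∘ fun ω => B t ω - B s ω := by
    intro s t
    ext ω
    simp only [Function.comp_apply]
    ring
  refine ⟨fun ω => (hBc ω).neg, ?_, fun t ht => (hBm t ht).neg, fun s t hs hst => ?_,
    fun s t hs hst => ?_⟩
  · filter_upwards [hB0] with ω h
    simp [h]
  · rw [hfun, ← MeasurableSpace.comap_comp]
    exact indep_of_indep_of_le_left (hBi s t hs hst)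
      (MeasurableSpace.comap_mono measurable_neg.comap_le)
  · have hm : Measurable fun ω => B t ω - B s ω :=
      ((hBm t (hs.trans hst)).mono (hFle _ (hs.trans hst)) le_rfl).sub
        ((hBm s hs).mono (hFle _ hs) le_rfl)
    rw [hfun, ← Measure.map_map measurable_neg hm, hBl s t hs hst]
    simpa using gaussianReal_map_neg (μ := 0) (v := (t - s).toNNReal)

/-- The path `x` solves `dx = f dt + dw` on `[0, 1)` with initial value `w 0`. -/
def SolvesOn (f x w : ℝ → ℝ) : Prop :=
  ∀ t ∈ Ico (0:ℝ) 1, IntegrableOn f (Icc 0 t) ∧ x t = (∫ s in (0:ℝ)..t, f s) + w t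

lemma SolvesOn.neg {f x w : ℝ → ℝ} (h : SolvesOn f x w) :
    SolvesOn (fun t => -f t) (fun t => -x t) (fun t => -w t) := by
  intro t ht
  obtain ⟨h1, h2⟩ := h t ht
  refine ⟨h1.neg, ?_⟩
  simp only [intervalIntegral.integral_neg, h2]
  ring

lemma SolvesOn.le_sub {f x w : ℝ → ℝ} (h : SolvesOn f x w) {r t c : ℝ} (hr : 0 ≤ r) (hrt : r ≤ t)
    (ht : t < 1) (hc : ∀ u ∈ Icc r t, c ≤ f u) : c * (t - r) + (w t - w r) ≤ x t - x r := by
  obtain ⟨hit, ht'⟩ := h t ⟨hr.trans hrt, ht⟩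
  obtain ⟨hir, hr'⟩ := h r ⟨hr, hrt.trans_lt ht⟩
  have h0t : IntervalIntegrable f volume 0 t :=
    (intervalIntegrable_iff_integrableOn_Icc_of_le (hr.trans hrt)).2 hit
  have h0r : IntervalIntegrable f volume 0 r :=
    (intervalIntegrable_iff_integrableOn_Icc_of_le hr).2 hir
  have hsub := intervalIntegral.integral_interval_sub_left h0t h0r
  have hle : (∫ _ in r..t, c) ≤ ∫ u in r..t, f u :=
    intervalIntegral.integral_mono_on hrt intervalIntegrable_const (h0r.symm.trans h0t) hc
  rw [intervalIntegral.integral_const, smul_eq_mul] at hle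
  linarith

lemma SolvesOn.sub_le {f x w : ℝ → ℝ} (h : SolvesOn f x w) {r t c : ℝ} (hr : 0 ≤ r) (hrt : r ≤ t)
    (ht : t < 1) (hc : ∀ u ∈ Icc r t, f u ≤ c) : x t - x r ≤ c * (t - r) + (w t - w r) := by
  have := h.neg.le_sub (c := -c) hr hrt ht fun u hu => neg_le_neg (hc u hu)
  linarith

lemma bBridge_neg (y t x : ℝ) : bBridge y t (-x) = -bBridge y t x := by
  unfold bBridge
  rcases lt_trichotomy x 0 with h | h | h
  · rw [if_pos (by linarith), if_neg (by linarith), if_pos h, div_neg]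
    ring
  · simp [h]
  · rw [if_neg (by linarith), if_pos (by linarith), if_pos h, div_neg]
    ring

lemma SolvesOn.bBridge_neg {y : ℝ} {x w : ℝ → ℝ} (h : SolvesOn (fun s => bBridge y s (x s)) x w) :
    SolvesOn (fun s => bBridge y s (-x s)) (fun t => -x t) (fun t => -w t) := by
  simpa only [_root_.bBridge_neg] using h.neg

lemma SolvesOn.endpoint_eq {y : ℝ} (hy : 0 < y) {x w : ℝ → ℝ} (hx : Continuous x)
    (hw : Continuous w) (h : SolvesOn (fun s => bBridge y s (x s)) x w)
    (hpos : ∀ t ∈ Ioo (0:ℝ) 1, 0 < x t) : x 1 = y := by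
  set g : ℝ → ℝ := fun r => x ((1 + r) / 2) - x r - (w ((1 + r) / 2) - w r) with hg
  have hgc : Continuous g := by fun_prop
  have hg1 : g 1 = 0 := by norm_num [hg]
  have hdrift : ∀ u ∈ Ioo (0:ℝ) 1, bBridge y u (x u) = (y - x u) / (1 - u) + 1 / x u :=
    fun u hu => if_pos (hpos u hu)
  rcases lt_trichotomy (x 1) y with hlt | heq | hgt
  · exfalso
    set κ := (y - x 1) / 2 with hκ
    have hκ0 : 0 < κ := by linarith
    obtain ⟨θ, hθ, hnear⟩ := Metric.eventually_nhds_iff.1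
      ((hx.continuousAt.eventually_lt (continuousAt_const (y := y - κ)) (by linarith)).and
        (hgc.continuousAt.eventually_lt (continuousAt_const (y := κ / 2))
          (by rw [hg1]; linarith)) : ∀ᶠ u in nhds 1, x u < y - κ ∧ g u < κ / 2)
    obtain ⟨r, hr, hr1⟩ := exists_between (max_lt one_pos (by linarith : 1 - θ < 1))
    have hr0 : 0 < r := (le_max_left _ _).trans_lt hr
    have hrθ : 1 - θ < r := (le_max_right _ _).trans_lt hr
    have hn : ∀ u, r ≤ u → u < 1 → x u < y - κ ∧ g u < κ / 2 := fun u hu hu1 =>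
      hnear (by rw [Real.dist_eq, abs_lt]; constructor <;> linarith)
    have hinc := h.le_sub (r := r) (t := (1 + r) / 2) (c := κ / (1 - r)) hr0.le (by linarith)
      (by linarith) fun u hu => by
        have hu1 : u < 1 := by linarith [hu.2]
        have hu0 : u ∈ Ioo (0:ℝ) 1 := ⟨by linarith [hu.1], hu1⟩
        rw [hdrift u hu0]
        have h1 : κ / (1 - r) ≤ (y - x u) / (1 - u) :=
          div_le_div₀ (by linarith [(hn u hu.1 hu1).1]) (by linarith [(hn u hu.1 hu1).1])
            (by linarith) (by linarith [hu.1])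
        linarith [one_div_pos.2 (hpos u hu0)]
    have e : κ / (1 - r) * ((1 + r) / 2 - r) = κ / 2 := by
      have : 1 - r ≠ 0 := by linarith
      field_simp
      ring
    rw [e] at hinc
    have := (hn r le_rfl hr1).2
    simp only [hg] at this
    linarith
  · exact heq
  · exfalso
    set κ := (x 1 - y) / 2 with hκ
    have hκ0 : 0 < κ := by linarith
    obtain ⟨θ, hθ, hnear⟩ := Metric.eventually_nhds_iff.1
      (((continuousAt_const (y := y + κ)).eventually_lt hx.continuousAt (by linarith)).and
        ((continuousAt_const (y := -κ / 2)).eventually_lt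
          (by fun_prop : ContinuousAt (fun r => g r - (1 - r) / (2 * y)) 1)
          (by rw [hg1, sub_self, zero_div]; linarith)) :
        ∀ᶠ u in nhds 1, y + κ < x u ∧ -κ / 2 < g u - (1 - u) / (2 * y))
    obtain ⟨r, hr, hr1⟩ := exists_between (max_lt one_pos (by linarith : 1 - θ < 1))
    have hr0 : 0 < r := (le_max_left _ _).trans_lt hr
    have hrθ : 1 - θ < r := (le_max_right _ _).trans_lt hr
    have hn : ∀ u, r ≤ u → u < 1 → y + κ < x u ∧ -κ / 2 < g u - (1 - u) / (2 * y) :=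
      fun u hu hu1 => hnear (by rw [Real.dist_eq, abs_lt]; constructor <;> linarith)
    have hinc := h.sub_le (r := r) (t := (1 + r) / 2) (c := -(κ / (1 - r)) + 1 / y) hr0.le
      (by linarith) (by linarith) fun u hu => by
        have hu1 : u < 1 := by linarith [hu.2]
        have hu0 : u ∈ Ioo (0:ℝ) 1 := ⟨by linarith [hu.1], hu1⟩
        rw [hdrift u hu0]
        have hxu := (hn u hu.1 hu1).1
        have h1 : κ / (1 - r) ≤ (x u - y) / (1 - u) :=
          div_le_div₀ (by linarith) (by linarith) (by linarith) (by linarith [hu.1])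
        have h2 : (y - x u) / (1 - u) = -((x u - y) / (1 - u)) := by ring
        have h3 : 1 / x u ≤ 1 / y := one_div_le_one_div_of_le hy (by linarith)
        linarith
    have e : (-(κ / (1 - r)) + 1 / y) * ((1 + r) / 2 - r) = -κ / 2 + (1 - r) / (2 * y) := by
      have : 1 - r ≠ 0 := by linarith
      field_simp
      ring
    rw [e] at hinc
    have := (hn r le_rfl hr1).2
    simp only [hg] at this
    linarith

lemma SolvesOn.pos_of_noHit {y : ℝ} (hy : 0 < y) {x w : ℝ → ℝ} (hx : Continuous x)
    (h : SolvesOn (fun s => bBridge y s (x s)) x w) {s : ℝ} (hs : 0 ≤ s)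
    (hw : ∀ j K : ℕ, NoHit w s (1 / (j + 1)) K) (hxs : 0 < x s) :
    ∀ t ∈ Ico s 1, 0 < x t := by
  intro t ht
  by_contra! hxt
  obtain ⟨v, ⟨hv, hxv⟩, hmin⟩ := (isCompact_Icc.inter_right (isClosed_singleton.preimage hx) :
    IsCompact (Icc s t ∩ x ⁻¹' {0})).exists_isLeast (by
      obtain ⟨v, hv, hxv⟩ := intermediate_value_Icc' ht.1 hx.continuousOn ⟨hxt, hxs.le⟩
      exact ⟨v, hv, hxv⟩)
  replace hxv : x v = 0 := hxv
  have hv1 : v < 1 := hv.2.trans_lt ht.2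
  have hsv : s < v := lt_of_le_of_ne hv.1 fun e => by rw [e, hxv] at hxs; exact hxs.false
  have hpos : ∀ u ∈ Ico s v, 0 < x u := by
    intro u hu
    by_contra! hxu
    obtain ⟨q, hq, hxq⟩ := intermediate_value_Icc' hu.1 hx.continuousOn ⟨hxu, hxs.le⟩
    have := hmin ⟨⟨hq.1, hq.2.trans (hu.2.le.trans hv.2)⟩, hxq⟩
    linarith [hq.2, hu.2]
  obtain ⟨N, hN⟩ := (isCompact_Icc (a := s) (b := v)).bddAbove_image hx.continuousOn
  obtain ⟨K, hK⟩ := exists_nat_ge (N / (1 - v))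
  obtain ⟨j, hj⟩ := exists_nat_one_div_lt hxs
  refine hw j K x v hx hsv (by linarith) hpos hxv hj.le ?_
  intro r t' c hr hrt ht' hc
  refine h.le_sub (hs.trans hr) hrt (ht'.trans hv1) fun u hu => (hc u hu).trans ?_
  have hu : u ∈ Ico s v := ⟨hr.trans hu.1, hu.2.trans_lt ht'⟩
  have hxu := hpos u hu
  have hxN : x u ≤ N := hN (mem_image_of_mem x ⟨hu.1, hu.2.le⟩)
  rw [bBridge, if_pos hxu]
  have h1 : x u / (1 - u) ≤ N / (1 - v) :=
    div_le_div₀ (hxu.le.trans hxN) hxN (by linarith) (by linarith [hu.2])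
  have h2 : 0 ≤ y / (1 - u) := div_nonneg hy.le (by linarith [hu.2])
  rw [sub_div]
  linarith

lemma SolvesOn.exists_ne_zero {y : ℝ} {x w : ℝ → ℝ} (hx : Continuous x)
    (h : SolvesOn (fun s => bBridge y s (x s)) x w) (hw : ∀ n : ℕ, w (1 / (n + 1)) ≠ 0) {t : ℝ}
    (ht : t ∈ Ioo (0:ℝ) 1) : ∃ q : ℚ, (q:ℝ) ∈ Ioo 0 t ∧ x q ≠ 0 := by
  by_contra! hcon
  have hzero : ∀ u ∈ Ioo 0 t, x u = 0 := by
    intro u hu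
    have hcl : IsClosed {u | x u = 0} := isClosed_eq hx continuous_const
    have hd := (Rat.denseRange_cast (𝕜 := ℝ)).open_subset_closure_inter
      (isOpen_Ioo (a := 0) (b := t))
    refine hcl.closure_subset_iff.2 ?_ (hd hu)
    rintro _ ⟨h1, q, rfl⟩
    exact hcon q h1
  obtain ⟨n, hn⟩ := exists_nat_one_div_lt ht.1
  have hn0 : (0:ℝ) < 1 / (n + 1) := by positivity
  refine hw n ?_
  have he := (h (1 / (n + 1)) ⟨hn0.le, hn.trans ht.2⟩).2
  have hint : (∫ s in (0:ℝ)..1 / (n + 1), bBridge y s (x s)) = 0 := by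
    apply intervalIntegral.integral_zero_ae
    refine ae_of_all _ fun u hu => ?_
    rw [uIoc_of_le hn0.le] at hu
    rw [hzero u ⟨hu.1, hu.2.trans_lt hn⟩]
    simp [bBridge]
  rw [hint, hzero _ ⟨hn0, hn⟩] at he
  linarith

lemma SolvesOn.abs_endpoint_eq_and_sign {y : ℝ} (hy : 0 < y) {x w : ℝ → ℝ} (hx : Continuous x)
    (hwc : Continuous w) (h : SolvesOn (fun s => bBridge y s (x s)) x w)
    (hw0 : ∀ n : ℕ, w (1 / (n + 1)) ≠ 0)
    (hw : ∀ q : ℚ, (0:ℝ) ≤ q → ∀ j K : ℕ, NoHit w q (1 / (j + 1)) K ∧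
      NoHit (fun t => -w t) q (1 / (j + 1)) K) :
    |x 1| = y ∧ ((∀ t ∈ Ioc (0:ℝ) 1, 0 < x t) ∨ (∀ t ∈ Ioc (0:ℝ) 1, x t < 0)) := by
  have hxn : Continuous fun t => -x t := hx.neg
  have hne : ∀ t ∈ Ioo (0:ℝ) 1, x t ≠ 0 := by
    intro t ht
    obtain ⟨q, hq, hxq⟩ := h.exists_ne_zero hx hw0 ht
    rcases hxq.lt_or_gt with hlt | hgt
    · have := h.bBridge_neg.pos_of_noHit hy hxn hq.1.le (fun j K => (hw q hq.1.le j K).2)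
        (by linarith) t ⟨hq.2.le, ht.2⟩
      exact (by linarith : x t < 0).ne
    · exact (h.pos_of_noHit hy hx hq.1.le (fun j K => (hw q hq.1.le j K).1) hgt t
        ⟨hq.2.le, ht.2⟩).ne'
  have hsign : (∀ t ∈ Ioo (0:ℝ) 1, 0 < x t) ∨ (∀ t ∈ Ioo (0:ℝ) 1, x t < 0) := by
    by_contra! hcon
    obtain ⟨⟨t, ht, hxt⟩, ⟨u, hu, hxu⟩⟩ := hcon
    obtain ⟨q, hq, hxq⟩ := isPreconnected_Ioo.intermediate_value ht hu hx.continuousOn ⟨hxt, hxu⟩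
    exact hne q hq hxq
  rcases hsign with hpos | hneg
  · have h1 := h.endpoint_eq hy hx hwc hpos
    refine ⟨by rw [h1, abs_of_pos hy], Or.inl fun t ht => ?_⟩
    rcases ht.2.lt_or_eq with hlt | rfl
    · exact hpos t ⟨ht.1, hlt⟩
    · rwa [h1]
  · have h1 := h.bBridge_neg.endpoint_eq hy hxn hwc.neg fun t ht => by linarith [hneg t ht]
    refine ⟨by rw [← abs_neg, h1, abs_of_pos hy], Or.inr fun t ht => ?_⟩
    rcases ht.2.lt_or_eq with hlt | rfl
    · exact hneg t ⟨ht.1, hlt⟩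
    · linarith

lemma IsBrownian.ae_ne_zero {Ω : Type*} [MeasurableSpace Ω] {F : ℝ → MeasurableSpace Ω}
    {P : Measure Ω} {B : ℝ → Ω → ℝ} (hFle : ∀ t, 0 ≤ t → F t ≤ ‹MeasurableSpace Ω›)
    (hB : IsBrownian F P B) {t : ℝ} (ht : 0 < t) : ∀ᵐ ω ∂P, B t ω ≠ 0 := by
  obtain ⟨-, hB0, hBm, -, hBl⟩ := hB
  have hm : Measurable fun ω => B t ω - B 0 ω :=
    ((hBm t ht.le).mono (hFle _ ht.le) le_rfl).sub ((hBm 0 le_rfl).mono (hFle _ le_rfl) le_rfl)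
  have hv : (t - 0).toNNReal ≠ 0 := by simpa using ht
  have := nullSingletonClass_gaussianReal (μ := 0) hv
  have h : ∀ᵐ z ∂(gaussianReal 0 (t - 0).toNNReal), z ≠ 0 := by
    rw [ae_iff]
    simpa only [ne_eq, not_not, ofPred_eq_eq_singleton] using measure_singleton (0:ℝ)
  rw [← hBl 0 t le_rfl ht.le] at h
  filter_upwards [hB0, ae_of_ae_map hm.aemeasurable h] with ω h0 h1
  rwa [h0, sub_zero] at h1

/-- Any weak solution on `[0, 1]` of the Bessel-bridge SDE from `0` to `±y`
satisfies `|X 1| = y` a.s. and does not change its sign on `(0, 1]`. -/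
theorem stmt14 (y : ℝ) (hy : 0 < y)
    {Ω : Type*} [m : MeasurableSpace Ω] (P : Measure Ω) [IsProbabilityMeasure P]
    (F : ℝ → MeasurableSpace Ω) (hFle : ∀ t, 0 ≤ t → F t ≤ m)
    (hFmono : ∀ s t : ℝ, 0 ≤ s → s ≤ t → F s ≤ F t)
    (B X : ℝ → Ω → ℝ) (hB : IsBrownian F P B)
    (hXc : ∀ ω, Continuous fun t => X t ω)
    (hXad : ∀ t, 0 ≤ t → Measurable[F t] (X t))
    (hX0 : ∀ᵐ ω ∂P, X 0 ω = 0)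
    (heq : ∀ᵐ ω ∂P, ∀ t ∈ Set.Ico (0:ℝ) 1,
      IntegrableOn (fun s => bBridge y s (X s ω)) (Set.Icc 0 t) ∧
      X t ω = (∫ s in (0:ℝ)..t, bBridge y s (X s ω)) + B t ω) :
    ∀ᵐ ω ∂P, |X 1 ω| = y ∧
      ((∀ t ∈ Set.Ioc (0:ℝ) 1, 0 < X t ω) ∨ (∀ t ∈ Set.Ioc (0:ℝ) 1, X t ω < 0)) := by
  have hne : ∀ᵐ ω ∂P, ∀ n : ℕ, B (1 / (n + 1)) ω ≠ 0 :=
    ae_all_iff.2 fun n => hB.ae_ne_zero hFle (by positivity)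
  have hhit : ∀ᵐ ω ∂P, ∀ q : ℚ, (0:ℝ) ≤ q → ∀ j K : ℕ,
      NoHit (fun t => B t ω) q (1 / (j + 1)) K ∧ NoHit (fun t => -B t ω) q (1 / (j + 1)) K := by
    refine ae_all_iff.2 fun q => ?_
    by_cases hq : (0:ℝ) ≤ q
    · have : ∀ᵐ ω ∂P, ∀ j K : ℕ, NoHit (fun t => B t ω) q (1 / (j + 1)) K ∧
          NoHit (fun t => -B t ω) q (1 / (j + 1)) K := by
        refine ae_all_iff.2 fun j => ae_all_iff.2 fun K => ?_
        exact (ae_noHit hFle hFmono hB hq (by positivity) K.cast_nonneg).and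
          (ae_noHit hFle hFmono (hB.neg hFle) hq (by positivity) K.cast_nonneg)
      filter_upwards [this] with ω h _
      exact h
    · exact ae_of_all _ fun ω h => absurd h hq
  filter_upwards [heq, hne, hhit] with ω h1 h2 h3
  exact SolvesOn.abs_endpoint_eq_and_sign hy (hXc ω) (hB.1 ω) h1 h2 h3
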